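/- arXiv:1503.03279 — 2 statements merged into one kernel-verified Lean document; each statement's English description precedes it below -/
import Mathlib

section
/- For every integer i, the identity ((m+1)n + im)·\overline{t^{n+i-1}u\,dt} = −∑_{j=0}^{n−1} ((m+1)j + mi)·a_j·\overline{t^{i+j-1}u\,dt} holds in Ω¹_{R_m}/dR_m. -/
open Polynomial LaurentPolynomial

noncomputable section

variable (n m : ℕ) (a : ℕ → ℂ)

/-- The polynomial `p(t) = aₙtⁿ + ... + a₁t + a₀`. -/
def pPoly : Polynomial ℂ := ∑ i ∈ Finset.range (n + 1), Polynomial.C (a i) * Polynomial.X ^ i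

/-- The ring `R_m = ℂ[t,t⁻¹][u]/(uᵐ - p(t))`. -/
abbrev Rm : Type :=
  AdjoinRoot ((Polynomial.X : Polynomial (LaurentPolynomial ℂ)) ^ m -
    Polynomial.C ((pPoly n a).toLaurent))

/-- The element `tⁱ` of `R_m`, for `i : ℤ`. -/
abbrev tpow (i : ℤ) : Rm n m a :=
  algebraMap (LaurentPolynomial ℂ) (Rm n m a) (LaurentPolynomial.T i)

/-- The element `u` of `R_m`. -/
abbrev uElt : Rm n m a := AdjoinRoot.root _

/-- The subspace `dR_m` of exact differentials inside the Kähler differentials `Ω¹_{R_m}`. -/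
abbrev dR : Submodule ℂ (Ω[Rm n m a⁄ℂ]) :=
  LinearMap.range (KaehlerDifferential.D ℂ (Rm n m a)).toLinearMap

/-- The quotient `Ω¹_{R_m}/dR_m`. -/
abbrev OmegaQ := Ω[Rm n m a⁄ℂ] ⧸ dR n m a

/-- The class `\overline{f dg}` in `Ω¹_{R_m}/dR_m`. -/
abbrev fdg (f g : Rm n m a) : OmegaQ n m a :=
  Submodule.Quotient.mk (f • KaehlerDifferential.D ℂ (Rm n m a) g)

theorem auxT {R M : Type*} [CommRing R] [Algebra ℂ R] [AddCommGroup M] [Module ℂ M] [Module R M]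
    [IsScalarTower ℂ R M] (D : Derivation ℂ R M) (T : ℤ → R) (h0 : T 0 = 1)
    (hT : ∀ i j, T (i + j) = T i * T j) (i : ℤ) :
    D (T i) = ((i : R) * T (i - 1)) • D (T 1) := by
  have key : ∀ j : ℤ, D (T (j + 1)) = T j • D (T 1) + T 1 • D (T j) := by
    intro j
    rw [hT, D.leibniz]
  induction i with
  | zero => simp [h0]
  | succ k ih =>
    rw [key, ih, smul_smul, ← add_smul]
    congr 1
    have : T (k : ℤ) = T 1 * T (k - 1) := by rw [← hT]; congr 1; ring
    push_cast
    rw [add_sub_cancel_right, this]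
    ring
  | pred k ih =>
    have h := key (-(k : ℤ) - 1)
    rw [sub_add_cancel, ih] at h
    have h1 : T (-1) * T 1 = 1 := by rw [← hT]; simpa using h0
    have h2 : D (T (-(k : ℤ) - 1)) = T (-1) • (T 1 • D (T (-(k : ℤ) - 1))) := by
      rw [smul_smul, h1, one_smul]
    rw [h2, eq_sub_of_add_eq' h.symm, ← sub_smul, smul_smul]
    congr 1
    have : T (-(k : ℤ) - 1 - 1) = T (-1) * T (-(k : ℤ) - 1) := by rw [← hT]; congr 1; ring
    rw [this]
    push_cast
    ring

theorem auxMain {R M : Type*} [CommRing R] [Algebra ℂ R] [AddCommGroup M] [Module ℂ M] [Module R M]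
    [IsScalarTower ℂ R M] (D : Derivation ℂ R M) (T : ℤ → R) (h0 : T 0 = 1)
    (hT : ∀ i j, T (i + j) = T i * T j) (u : R) (n m : ℕ) (hm : 2 ≤ m) (a : ℕ → ℂ)
    (hu : u ^ m = ∑ j ∈ Finset.range (n + 1), a j • T j) (i : ℤ) :
    D ((m : R) * (T i * u ^ (m + 1))) = ∑ j ∈ Finset.range (n + 1),
      (((((m : ℤ) + 1) * j + m * i : ℤ) : ℂ) * a j) • (T (i + (j : ℤ) - 1) * u) • D (T 1) := by
  have hdu : ((m : R) * u ^ m) • D u = u • D (u ^ m) := by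
    rw [D.leibniz_pow, ← Nat.cast_smul_eq_nsmul R, smul_smul, smul_smul]
    congr 1
    obtain ⟨k, rfl⟩ : ∃ k, m = k + 1 := ⟨m - 1, by omega⟩
    simp only [Nat.add_sub_cancel]
    ring
  have hDp : D (u ^ m) = (∑ j ∈ Finset.range (n + 1), a j • ((j : R) * T (j - 1))) • D (T 1) := by
    rw [hu, map_sum, Finset.sum_smul]
    refine Finset.sum_congr rfl fun j _ => ?_
    rw [D.map_smul, auxT D T h0 hT]
    simp
  have e : D ((m : R) * (T i * u ^ (m + 1))) =
      ((m : R) * u ^ (m + 1)) • D (T i) + ((m + 1 : R) * T i) • (((m : R) * u ^ m) • D u) := by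
    rw [D.leibniz, D.map_natCast, smul_zero, add_zero, D.leibniz, D.leibniz_pow,
      ← Nat.cast_smul_eq_nsmul R]
    simp only [smul_add, smul_smul, Nat.add_sub_cancel]
    rw [add_comm]
    push_cast
    congr 2
    ring
  rw [e, hdu, hDp, auxT D T h0 hT i, pow_succ, hu]
  simp only [← smul_assoc, smul_eq_mul]
  rw [← add_smul, ← Finset.sum_smul]
  congr 1
  simp only [Finset.mul_sum, Finset.sum_mul]
  rw [← Finset.sum_add_distrib]
  refine Finset.sum_congr rfl fun j _ => ?_
  have e1 : T (i + (j : ℤ) - 1) = T i * T j * T (-1) := by rw [← hT, ← hT]; congr 1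
  have e2 : T ((j : ℤ) - 1) = T j * T (-1) := by rw [← hT]; congr 1
  have e3 : T (i - 1) = T i * T (-1) := by rw [← hT]; congr 1
  rw [e1, e2, e3]
  simp only [Algebra.smul_def, map_mul, map_intCast]
  push_cast
  ring

/-- For every integer `i`,
`((m+1)n + im)·\overline{t^{n+i-1}u dt} = −∑_{j=0}^{n−1} ((m+1)j + mi)·a_j·\overline{t^{i+j-1}u dt}`
holds in `Ω¹_{R_m}/dR_m`. -/
theorem statement1 (hn : 1 ≤ n) (hm : 2 ≤ m) (han : a n = 1) (i : ℤ) :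
    ((((m : ℤ) + 1) * n + i * m : ℤ) : ℂ) •
        fdg n m a (tpow n m a ((n : ℤ) + i - 1) * uElt n m a) (tpow n m a 1) =
      -∑ j ∈ Finset.range n,
        (((((m : ℤ) + 1) * j + m * i : ℤ) : ℂ) * a j) •
          fdg n m a (tpow n m a (i + (j : ℤ) - 1) * uElt n m a) (tpow n m a 1) := by
  have hu : (uElt n m a) ^ m = ∑ j ∈ Finset.range (n + 1), a j • tpow n m a j := by
    have h := AdjoinRoot.eval₂_root ((Polynomial.X : Polynomial (LaurentPolynomial ℂ)) ^ m -
      Polynomial.C ((pPoly n a).toLaurent))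
    rw [Polynomial.eval₂_sub, Polynomial.eval₂_pow, Polynomial.eval₂_X, Polynomial.eval₂_C,
      sub_eq_zero] at h
    have hp : (pPoly n a).toLaurent =
        ∑ j ∈ Finset.range (n + 1), a j • (LaurentPolynomial.T (j : ℤ) : LaurentPolynomial ℂ) := by
      rw [pPoly, map_sum]
      refine Finset.sum_congr rfl fun j _ => ?_
      rw [Polynomial.toLaurent_C_mul_X_pow, ← LaurentPolynomial.smul_eq_C_mul]
    refine h.trans ((congrArg (algebraMap (LaurentPolynomial ℂ) (Rm n m a)) hp).trans ?_)
    rw [map_sum]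
    refine Finset.sum_congr rfl fun j _ => ?_
    exact (IsScalarTower.toAlgHom ℂ (LaurentPolynomial ℂ) (Rm n m a)).toLinearMap.map_smul (a j) _
  have h := auxMain (KaehlerDifferential.D ℂ (Rm n m a)) (tpow n m a)
    (by simp [tpow]) (fun i j => by simp only [tpow]; rw [LaurentPolynomial.T_add, map_mul])
    (uElt n m a) n m hm a hu i
  have h' := congrArg (dR n m a).mkQ h
  have hz : (dR n m a).mkQ ((KaehlerDifferential.D ℂ (Rm n m a))
      ((m : Rm n m a) * (tpow n m a i * uElt n m a ^ (m + 1)))) = 0 :=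
    (Submodule.Quotient.mk_eq_zero (dR n m a)).2 ⟨_, rfl⟩
  rw [hz, map_sum, Finset.sum_range_succ] at h'
  simp only [map_smul] at h'
  rw [han, mul_one] at h'
  have e1 : (n : ℤ) + i - 1 = i + n - 1 := by ring
  have e2 : i * (m : ℤ) = m * i := by ring
  rw [e1, e2, eq_neg_iff_add_eq_zero, add_comm]
  exact h'.symm
end
end

section
/- For every natural number m, the polynomial P_m(c) satisfies the fourth-order linear differential equation 16(c²−1)²·P_m'''' + 160c(c²−1)·P_m''' − 8(c²(m²−4m−46) − m² + 4m + 22)·P_m'' − 24c(m²−4m−6)·P_m' + (m−4)²m²·P_m = 0, where primes denote differentiation with respect to c. -/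
open Polynomial

noncomputable section

def auxR : ℕ → ℚ[X]
  | 0 => 0
  | 1 => 1
  | (n+2) => C (1 / (2 * (n:ℚ) + 3)) * (4 * (n:ℚ[X]) * X * auxR (n+1) - (2 * (n:ℚ[X]) - 3) * auxR n)

theorem aux_ne (n : ℕ) : (2 * (n:ℚ[X]) + 3) ≠ 0 := by
  have : (2 * (n:ℚ[X]) + 3) = ((2 * n + 3 : ℕ) : ℚ[X]) := by push_cast; ring
  rw [this]
  exact Nat.cast_ne_zero.mpr (by omega)

theorem auxR_rec (n : ℕ) : (2 * (n:ℚ[X]) + 3) * auxR (n+2) =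
    4 * (n:ℚ[X]) * X * auxR (n+1) - (2 * (n:ℚ[X]) - 3) * auxR n := by
  have h : (2 * (n:ℚ[X]) + 3) * C (1 / (2 * (n:ℚ) + 3)) = 1 := by
    have : (2 * (n:ℚ[X]) + 3) = C (2 * (n:ℚ) + 3) := by
      simp only [C_add, C_mul, map_natCast, map_ofNat]
    rw [this, ← C_mul, mul_one_div_cancel (by positivity), C_1]
  rw [auxR, ← mul_assoc, h, one_mul]

theorem aux_d (y : ℕ → ℚ[X])
    (hy : ∀ n : ℕ, (2 * (n:ℚ[X]) + 3) * y (n+2) =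
      4 * (n:ℚ[X]) * X * y (n+1) - (2 * (n:ℚ[X]) - 3) * y n) (n : ℕ) :
    (2 * (n:ℚ[X]) + 3) * derivative (y (n+2)) = 4 * (n:ℚ[X]) * y (n+1) +
      4 * (n:ℚ[X]) * X * derivative (y (n+1)) - (2 * (n:ℚ[X]) - 3) * derivative (y n) := by
  have d := congrArg derivative (hy n)
  simp only [derivative_mul, derivative_add, derivative_sub, derivative_natCast, derivative_X,
    derivative_ofNat] at d
  linear_combination d

theorem aux_F (y f : ℕ → ℚ[X])
    (hy : ∀ n : ℕ, (2 * (n:ℚ[X]) + 3) * y (n+2) =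
      4 * (n:ℚ[X]) * X * y (n+1) - (2 * (n:ℚ[X]) - 3) * y n)
    (hf : ∀ n : ℕ, (2 * (n:ℚ[X]) + 3) * f (n+2) =
      4 * (n:ℚ[X]) * X * f (n+1) - (2 * (n:ℚ[X]) - 3) * f n)
    (h0 : 2 * (X^2-1) * derivative (y 0) - 3 * X * y 0 - y 1 = f 0)
    (h1 : 2 * (X^2-1) * derivative (y 1) - X * y 1 - 3 * y 2 = f 1) (n : ℕ) :
    2 * (X^2-1) * derivative (y n) + (2 * (n:ℚ[X]) - 3) * X * y n
      - (2 * (n:ℚ[X]) + 1) * y (n+1) = f n := by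
  induction n using Nat.twoStepInduction with
  | zero => push_cast; linear_combination h0
  | one => push_cast; linear_combination h1
  | more n F0 F1 =>
    apply mul_left_cancel₀ (aux_ne n)
    have r1 := hy (n+1)
    push_cast at F1 r1 ⊢
    linear_combination 2 * (X^2-1) * aux_d y hy n - (2 * (n:ℚ[X]) + 3) * r1
      + (2 * (n:ℚ[X]) - 3) * X * hy n + 4 * (n:ℚ[X]) * X * F1 - (2 * (n:ℚ[X]) - 3) * F0 - hf n

set_option maxHeartbeats 4000000 in
theorem aux_ode (N A B U V : ℚ[X]) (hN : derivative N = 0)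
    (hA : 2*(X^2-1) * derivative A = -2*N*X*A + (2*N+1)*B - 3*U)
    (hB : 2*(X^2-1) * derivative B = (2*N-2)*X*B - (2*N-3)*A - 3*V)
    (hU : 2*(X^2-1) * derivative U = -(2*N-2)*X*U + (2*N+1)*V - A)
    (hV : 2*(X^2-1) * derivative V = 2*N*X*V - (2*N-3)*U - B) :
    16 * (X^2-1)^2 * derivative^[4] A + 160 * X * (X^2-1) * derivative^[3] A
     - 8 * ((4*N^2-8*N-46) * X^2 + (-4*N^2+8*N+22)) * derivative^[2] A
     - 24 * (4*N^2-8*N-6) * X * derivative A + (2*N-4)^2*(2*N)^2 * A = 0 := by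
    have E1 : (2*(X^2-1))^1 * derivative^[1] A = ((-2)*X*N)*A + ((2)*N + (1))*B + ((-3))*U := by
      simp only [Function.iterate_succ, Function.iterate_zero, Function.comp, id]
      linear_combination hA
    have E2 : (2*(X^2-1))^2 * derivative^[2] A = ((4)*X^2*N + (6) + (8)*N + (4)*X^2*N^2 + (-4)*N^2)*A + ((-12)*X*N + (-6)*X)*B + ((6)*X + (12)*X*N)*U + ((-12)*N + (-6))*V := by
      have d := congrArg derivative E1
      simp only [Function.iterate_succ, Function.iterate_zero, Function.comp, id, derivative_mul, derivative_add, derivative_sub, derivative_neg, derivative_X, derivative_ofNat, derivative_one, derivative_pow, Nat.cast_ofNat, Nat.cast_one, map_ofNat, map_one, hN] at d E1 ⊢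
      linear_combination 2*(X^2-1)*d - 4*X*E1 + ((-2)*X*N)*hA + ((2)*N + (1))*hB + ((-3))*hU
    have E3 : (2*(X^2-1))^3 * derivative^[3] A = ((-16)*X^3*N + (-24)*X^3*N^2 + (-72)*X + (-128)*X*N + (24)*X*N^2 + (-8)*X^3*N^3 + (8)*X*N^3)*A + ((88)*X^2*N + (48)*X^2 + (-12)*X^2*N^2 + (56)*N + (24) + (12)*N^2 + (8)*X^2*N^3 + (-8)*N^3)*B + ((-24)*X^2 + (-72)*X^2*N + (-48) + (-72)*N + (-36)*X^2*N^2 + (36)*N^2)*U + ((144)*X*N + (72)*X)*V := by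
      have d := congrArg derivative E2
      simp only [Function.iterate_succ, Function.iterate_zero, Function.comp, id, derivative_mul, derivative_add, derivative_sub, derivative_neg, derivative_X, derivative_ofNat, derivative_one, derivative_pow, Nat.cast_ofNat, Nat.cast_one, map_ofNat, map_one, hN] at d E2 ⊢
      linear_combination 2*(X^2-1)*d - 8*X*E2 + ((4)*X^2*N + (6) + (8)*N + (4)*X^2*N^2 + (-4)*N^2)*hA + ((-12)*X*N + (-6)*X)*hB + ((6)*X + (12)*X*N)*hU + ((-12)*N + (-6))*hV
    have E4 : (2*(X^2-1))^4 * derivative^[4] A = ((96)*X^4*N + (176)*X^4*N^2 + (888)*X^2 + (1760)*X^2*N + (-16)*X^2*N^2 + (96)*X^4*N^3 + (-32)*X^2*N^3 + (264) + (448)*N + (-160)*N^2 + (-64)*N^3 + (16)*X^4*N^4 + (-32)*X^2*N^4 + (16)*N^4)*A + ((-800)*X^3*N + (-480)*X^3 + (240)*X^3*N^2 + (-160)*X^3*N^3 + (-1504)*X*N + (-672)*X + (-240)*X*N^2 + (160)*X*N^3)*B + ((144)*X^3 + (528)*X^3*N + (432)*X^3*N^2 + (1008)*X + (1776)*X*N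 + (-432)*X*N^2 + (96)*X^3*N^3 + (-96)*X*N^3)*U + ((-1680)*X^2*N + (-888)*X^2 + (144)*X^2*N^2 + (-624)*N + (-264) + (-144)*N^2 + (-96)*X^2*N^3 + (96)*N^3)*V := by
      have d := congrArg derivative E3
      simp only [Function.iterate_succ, Function.iterate_zero, Function.comp, id, derivative_mul, derivative_add, derivative_sub, derivative_neg, derivative_X, derivative_ofNat, derivative_one, derivative_pow, Nat.cast_ofNat, Nat.cast_one, map_ofNat, map_one, hN] at d E3 ⊢
      linear_combination 2*(X^2-1)*d - 12*X*E3 + ((-16)*X^3*N + (-24)*X^3*N^2 + (-72)*X + (-128)*X*N + (24)*X*N^2 + (-8)*X^3*N^3 + (8)*X*N^3)*hA + ((88)*X^2*N + (48)*X^2 + (-12)*X^2*N^2 + (56)*N + (24) + (12)*N^2 + (8)*X^2*N^3 + (-8)*N^3)*hB + ((-24)*X^2 + (-72)*X^2*N + (-48) + (-72)*N + (-36)*X^2*N^2 + (36)*N^2)*hU + ((144)*X*N + (72)*X)*hV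
    have hw : (X^2-1 : ℚ[X])^2 ≠ 0 := pow_ne_zero _ (by
      have := X_pow_sub_C_ne_zero (R := ℚ) (n := 2) (by norm_num) 1
      simpa using this)
    apply mul_left_cancel₀ hw
    rw [Function.iterate_one] at E1
    linear_combination E4 + 20*X*E3 - 2*((4*N^2-8*N-46) * X^2 + (-4*N^2+8*N+22))*E2 -
      12*X*(4*N^2-8*N-6)*(X^2-1)*E1

/-- Let `P_m(c) ∈ ℚ[c]` be the polynomials determined by `P₀ = 1`, `P₁ = P₂ = P₃ = 0` and
the recursion `(6+2k)·P_{k+4}(c) = 4kc·P_{k+2}(c) − 2(k−3)·P_k(c)` for `k ≥ 0`.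
Then for every natural number `m`, `P_m` satisfies the fourth-order linear ODE
`16(c²−1)²·P_m⁗ + 160c(c²−1)·P_m''' − 8(c²(m²−4m−46) − m² + 4m + 22)·P_m''
  − 24c(m²−4m−6)·P_m' + (m−4)²m²·P_m = 0`. -/
theorem statement13 (P : ℕ → Polynomial ℚ)
    (hP0 : P 0 = 1) (hP1 : P 1 = 0) (hP2 : P 2 = 0) (hP3 : P 3 = 0)
    (hPrec : ∀ k : ℕ,
      Polynomial.C ((6 : ℚ) + 2 * k) * P (k + 4) =
        Polynomial.C ((4 : ℚ) * k) * Polynomial.X * P (k + 2) -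
          Polynomial.C (2 * ((k : ℚ) - 3)) * P k)
    (m : ℕ) :
    Polynomial.C (16 : ℚ) * (Polynomial.X ^ 2 - 1) ^ 2 * (derivative^[4] (P m)) +
        Polynomial.C (160 : ℚ) * Polynomial.X * (Polynomial.X ^ 2 - 1) *
          (derivative^[3] (P m)) -
        Polynomial.C (8 : ℚ) *
          (Polynomial.C ((m : ℚ) ^ 2 - 4 * m - 46) * Polynomial.X ^ 2 +
            Polynomial.C (-(m : ℚ) ^ 2 + 4 * m + 22)) * (derivative^[2] (P m)) -
        Polynomial.C (24 * ((m : ℚ) ^ 2 - 4 * m - 6)) * Polynomial.X * (derivative (P m)) +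
        Polynomial.C (((m : ℚ) - 4) ^ 2 * (m : ℚ) ^ 2) * P m = 0 := by
  have key : ∀ k : ℕ, (3 + (k:ℚ[X])) * P (k+4) = 2 * (k:ℚ[X]) * X * P (k+2) - ((k:ℚ[X]) - 3) * P k := by
    intro k
    have h := hPrec k
    simp only [C_add, C_mul, C_sub, map_natCast, map_ofNat] at h
    apply mul_left_cancel₀ (two_ne_zero : (2:ℚ[X]) ≠ 0)
    linear_combination h
  rcases Nat.even_or_odd' m with ⟨n, rfl | rfl⟩
  · have hQ : ∀ n : ℕ, (2 * (n:ℚ[X]) + 3) * P (2*(n+2)) =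
      4 * (n:ℚ[X]) * X * P (2*(n+1)) - (2 * (n:ℚ[X]) - 3) * P (2*n) := by
      intro n
      have h := key (2*n)
      rw [show 2*(n+2) = 2*n+4 by ring, show 2*(n+1) = 2*n+2 by ring]
      push_cast at h
      linear_combination h
    have hP4 : P 4 = 1 := by
      have h := hQ 0
      norm_num [hP0] at h
      exact h
    have hR2 : auxR 2 = 0 := by simp [auxR]
    have FQ := aux_F (fun n => P (2*n)) (fun n => -3 * X * P (2*n) - 3 * auxR n) hQ
      (fun n => by linear_combination -3 * X * hQ n - 3 * auxR_rec n)
      (by simp [hP0, hP2, auxR]) (by simp [hP2, hP4, auxR])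
    have FR := aux_F auxR (fun n => - P (2*n) - X * auxR n) auxR_rec
      (fun n => by linear_combination - hQ n - X * auxR_rec n)
      (by simp [hP0, auxR]) (by simp [hP2, hR2]; simp [auxR])
    have a0 := FQ n
    have a1 := FQ (n+1)
    have b0 := FR n
    have b1 := FR (n+1)
    have q := hQ n
    have r := auxR_rec n
    push_cast at a0 a1 b0 b1
    have main := aux_ode (n:ℚ[X]) (P (2*n)) (P (2*(n+1))) (auxR n) (auxR (n+1)) (by simp)
      (by linear_combination a0) (by linear_combination a1 + q)
      (by linear_combination b0) (by linear_combination b1 + r)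
    simp only [C_add, C_mul, C_sub, C_neg, C_pow, map_natCast, map_ofNat, Nat.cast_mul, Nat.cast_ofNat]
    linear_combination main
  · have hz : ∀ n : ℕ, P (2*n+1) = 0 := by
      intro n
      induction n using Nat.twoStepInduction with
      | zero => exact hP1
      | one => exact hP3
      | more n h0 h1 =>
        have h := key (2*n+1)
        rw [h0, show 2*n+1+2 = 2*(n+1)+1 by ring, h1, mul_zero, mul_zero, sub_zero] at h
        rcases mul_eq_zero.mp h with h | h
        · exfalso
          have : ((3 + (2*n+1) : ℕ) : ℚ[X]) = 0 := by push_cast at h ⊢; exact h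
          exact absurd (Nat.cast_eq_zero.mp this) (by omega)
        · exact h
    rw [hz]
    simp
end
end
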